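/- arXiv:1907.01379 — 9 statements merged into one kernel-verified Lean document; each statement's English description precedes it below -/
import Mathlib

section
/- Let D be an n×n dissimilarity matrix (a symmetric real matrix with zero diagonal and nonnegative entries). Define A = (a_ij) by a_ij = -(1/2) d_ij^2, and let B be the double mean-centering of A, i.e. b_rs = a_rs - (1/n)Σ_s a_rs - (1/n)Σ_r a_rs + (1/n^2)Σ_{r,s} a_rs (equivalently B = H A H with H = I - (1/n) J, where J is the all-ones matrix). Then D is Euclidean — i.e. there exist points x_1, …, x_n in some Euclidean space ℝ^N such that ‖x_r - x_s‖ = d_rs for all r, s — if and only if B is a positive semi-definite matrix. -/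
open Matrix

/-- **Theorem (Euclidean criterion for dissimilarity matrices).**
A dissimilarity matrix `D` (symmetric, zero diagonal, nonnegative entries) is
Euclidean, i.e. realizable as the matrix of pairwise Euclidean distances of
`n` points in some `ℝ^N`, if and only if its double mean-centering
`B = H * A * H` (where `A = -(1/2) D∘D` and `H = 1 - (1/n) J`) is positive
semi-definite. -/
theorem dissimilarity_euclidean_iff_posSemidef
    (n : ℕ) (hn : 0 < n) (D : Matrix (Fin n) (Fin n) ℝ)
    (hsymm : D.IsSymm) (hdiag : ∀ i, D i i = 0) (hnonneg : ∀ i j, 0 ≤ D i j)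
    (A H B : Matrix (Fin n) (Fin n) ℝ)
    (hA : ∀ i j, A i j = -(1/2) * (D i j)^2)
    (hH : H = 1 - (n : ℝ)⁻¹ • Matrix.of (fun _ _ => (1 : ℝ)))
    (hB : B = H * A * H) :
    (∃ (N : ℕ) (x : Fin n → EuclideanSpace ℝ (Fin N)),
      ∀ r s, ‖x r - x s‖ = D r s) ↔ B.PosSemidef := by
  have hn0 : (n : ℝ) ≠ 0 := by positivity
  have hHT : Hᵀ = H := by
    subst hH
    ext i j
    simp [Matrix.one_apply, eq_comm]
  have hH1 : H *ᵥ (fun _ => (1 : ℝ)) = 0 := by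
    subst hH
    ext i
    simp [Matrix.one_apply, Matrix.mulVec, dotProduct, hn0]
  have h1H : (fun _ => (1 : ℝ)) ᵥ* H = 0 := by
    rw [← hHT, Matrix.vecMul_transpose, hH1]
  constructor
  · rintro ⟨N, x, hx⟩
    let X : Matrix (Fin n) (Fin N) ℝ := Matrix.of fun r k => x r k
    let q : Fin n → ℝ := fun r => -(1/2) * ‖x r‖^2
    have hAX : A = X * Xᵀ + vecMulVec q (fun _ => 1) + vecMulVec (fun _ => 1) q := by
      ext r s
      have h := norm_sub_sq_real (x r) (x s)
      have hi : inner ℝ (x r) (x s) = (X * Xᵀ) r s := by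
        simp [X, Matrix.mul_apply, PiLp.inner_apply, mul_comm]
      rw [hA, ← hx, h, hi]
      simp only [Matrix.add_apply, vecMulVec_apply, q]
      ring
    have hBX : B = (H * X) * (H * X)ᴴ := by
      rw [hB, hAX, Matrix.mul_add, Matrix.mul_add, Matrix.add_mul, Matrix.add_mul,
        Matrix.mul_vecMulVec, Matrix.mul_vecMulVec, Matrix.vecMulVec_mul, Matrix.vecMulVec_mul,
        hH1, h1H, conjTranspose_eq_transpose_of_trivial, Matrix.transpose_mul, hHT]
      simp [Matrix.mul_assoc]
    rw [hBX]
    exact Matrix.posSemidef_self_mul_conjTranspose _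
  · intro hP
    obtain ⟨C, hC⟩ : ∃ C : Matrix (Fin n) (Fin n) ℝ, B = Cᴴ * C := by
      open scoped MatrixOrder in
      exact CStarAlgebra.nonneg_iff_eq_star_mul_self.mp hP.nonneg
    let x : Fin n → EuclideanSpace ℝ (Fin n) := fun r => WithLp.toLp 2 fun k => C k r
    refine ⟨n, x, fun r s => ?_⟩
    have hi : ∀ r s, inner ℝ (x r) (x s) = B r s := by
      intro r s
      rw [hC]
      simp [x, Matrix.mul_apply, PiLp.inner_apply, mul_comm]
    have hAs : ∀ i j, A i j = A j i := by
      intro i j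
      rw [hA, hA, hsymm.apply]
    have hBe : ∀ r s, B r s = A r s - (n : ℝ)⁻¹ * ∑ k, A k s
        - (n : ℝ)⁻¹ * ∑ k, A k r + (n : ℝ)⁻¹ * ((n : ℝ)⁻¹ * ∑ j, ∑ k, A k j) := by
      intro r s
      have h1 : ∀ j, (H * A) r j = A r j - (n : ℝ)⁻¹ * ∑ k, A k j := by
        intro j
        rw [hH, Matrix.sub_mul, Matrix.one_mul, Matrix.smul_mul]
        simp [Matrix.mul_apply]
      have h2 : (H * A * H) r s = (H * A) r s - (n : ℝ)⁻¹ * ∑ j, (H * A) r j := by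
        generalize H * A = M
        rw [hH, Matrix.mul_sub, Matrix.mul_one, Matrix.mul_smul]
        simp [Matrix.mul_apply]
      rw [hB, h2]
      simp only [h1, Finset.sum_sub_distrib, ← Finset.mul_sum]
      simp only [hAs r]
      ring
    have hd : ∀ i, A i i = 0 := by
      intro i
      rw [hA, hdiag]
      simp
    have hsq : ‖x r - x s‖^2 = (D r s)^2 := by
      rw [norm_sub_sq_real, ← real_inner_self_eq_norm_sq, ← real_inner_self_eq_norm_sq,
        hi, hi, hi, hBe r r, hBe s s, hBe r s, hd, hd, hA r s]
      ring
    exact (sq_eq_sq₀ (norm_nonneg _) (hnonneg r s)).mp hsq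
end

section
/- Let D be an n×n dissimilarity matrix, let A = (-(1/2) d_ij^2), and let B = H A H be its double mean-centering with H = I - (1/n) J. If B is positive semi-definite of rank m, then there exist points x_1, …, x_n in ℝ^m such that ‖x_r - x_s‖ = d_rs for all r, s; that is, a perfect realization of the dissimilarities exists in m-dimensional Euclidean space. -/
open Matrix

theorem aux_gram (n m : ℕ) (C : Matrix (Fin n) (Fin n) ℝ) (h : C.rank = m) :
    ∃ x : Fin n → EuclideanSpace ℝ (Fin m), ∀ r s,
      ‖x r - x s‖ ^ 2 = ∑ k, (C k r - C k s) ^ 2 := by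
  let c : Fin n → EuclideanSpace ℝ (Fin n) := fun r => WithLp.toLp 2 (C.col r)
  let S : Submodule ℝ (EuclideanSpace ℝ (Fin n)) := Submodule.span ℝ (Set.range c)
  have hS : Module.finrank ℝ S = m := by
    rw [← h, Matrix.rank_eq_finrank_span_cols]
    have : S = (Submodule.span ℝ (Set.range C.col)).map
        (WithLp.linearEquiv 2 ℝ (Fin n → ℝ)).symm.toLinearMap := by
      rw [Submodule.map_span, ← Set.range_comp]
      rfl
    rw [this]
    exact LinearEquiv.finrank_map_eq _ _
  let b := (stdOrthonormalBasis ℝ S).reindex (finCongr hS)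
  refine ⟨fun r => b.repr ⟨c r, Submodule.subset_span ⟨r, rfl⟩⟩, fun r s => ?_⟩
  rw [← map_sub, LinearIsometryEquiv.norm_map, Submodule.coe_norm, EuclideanSpace.norm_sq_eq]
  simp [c]

theorem aux_center (n : ℕ) (A H : Matrix (Fin n) (Fin n) ℝ)
    (hH : H = 1 - (n : ℝ)⁻¹ • Matrix.of (fun _ _ => (1 : ℝ))) (r s : Fin n) :
    (H * A * H) r r + (H * A * H) s s - (H * A * H) r s - (H * A * H) s r
      = A r r + A s s - A r s - A s r := by
  have key : ∃ a b : Fin n → ℝ, ∃ c : ℝ, ∀ i j, (H * A * H) i j = A i j - a i - b j + c := by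
    refine ⟨fun i => (n : ℝ)⁻¹ * ∑ k, A i k, fun j => (n : ℝ)⁻¹ * ∑ k, A k j,
      (n : ℝ)⁻¹ * ((n : ℝ)⁻¹ * ∑ k, ∑ l, A l k), fun i j => ?_⟩
    subst hH
    simp only [sub_mul, mul_sub, one_mul, mul_one, Matrix.smul_mul, Matrix.mul_smul]
    simp only [Matrix.sub_apply, Matrix.smul_apply, Matrix.mul_apply, Matrix.of_apply,
      smul_eq_mul, one_mul, mul_one, Finset.sum_sub_distrib, ← Finset.mul_sum]
    ring
  obtain ⟨a, b, c, h⟩ := key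
  simp only [h]
  ring

theorem dissimilarity_realization_in_rank_dimension
    (n m : ℕ) (hn : 0 < n) (D : Matrix (Fin n) (Fin n) ℝ)
    (hsymm : D.IsSymm) (hdiag : ∀ i, D i i = 0) (hnonneg : ∀ i j, 0 ≤ D i j)
    (A H B : Matrix (Fin n) (Fin n) ℝ)
    (hA : ∀ i j, A i j = -(1/2) * (D i j)^2)
    (hH : H = 1 - (n : ℝ)⁻¹ • Matrix.of (fun _ _ => (1 : ℝ)))
    (hB : B = H * A * H)
    (hpsd : B.PosSemidef) (hrank : B.rank = m) :
    ∃ x : Fin n → EuclideanSpace ℝ (Fin m), ∀ r s, ‖x r - x s‖ = D r s := by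
  obtain ⟨C, hC⟩ : ∃ C : Matrix (Fin n) (Fin n) ℝ, B = Cᴴ * C := by
    open scoped MatrixOrder in
    exact CStarAlgebra.nonneg_iff_eq_star_mul_self.mp hpsd.nonneg
  have hr : C.rank = m := by rw [← hrank, hC, Matrix.rank_conjTranspose_mul_self]
  obtain ⟨x, hx⟩ := aux_gram n m C hr
  refine ⟨x, fun r s => ?_⟩
  have h1 := aux_center n A H hH r s
  rw [← hB, hC] at h1
  have h2 : D s r = D r s := hsymm.apply r s
  rw [hA, hA, hA, hA, hdiag, hdiag, h2] at h1
  have h3 : ‖x r - x s‖ ^ 2 = D r s ^ 2 := by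
    rw [hx]
    simp only [Matrix.mul_apply, Matrix.conjTranspose_apply, star_trivial] at h1
    rw [← Finset.sum_add_distrib, ← Finset.sum_sub_distrib, ← Finset.sum_sub_distrib] at h1
    calc _ = _ := Finset.sum_congr rfl (fun k _ => by ring)
      _ = _ := h1
      _ = _ := by ring
  exact (sq_eq_sq₀ (norm_nonneg _) (hnonneg r s)).mp h3
end

section
/- Let B be a real symmetric n×n matrix with eigenvalues λ_1 ≥ λ_2 ≥ … ≥ λ_n (listed with multiplicity), and fix m ≤ n. Then the minimum of the strain ‖B - B̂‖_F^2 = Σ_{i,j} (b_ij - b̂_ij)^2, taken over all real positive semi-definite n×n matrices B̂ of rank at most m, equals Σ_{i=1}^{m} (min(λ_i, 0))^2 + Σ_{i=m+1}^{n} λ_i^2; in particular the minimum is achieved by the classical MDS solution B̂ = Σ_{i ≤ m, λ_i > 0} λ_i v_i v_i^T, where v_i are corresponding orthonormal eigenvectors of B. -/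
open Matrix Finset

lemma frob_trace {n : ℕ} (A : Matrix (Fin n) (Fin n) ℝ) :
    ∑ i, ∑ j, (A i j)^2 = (A * Aᵀ).trace := by
  simp [Matrix.trace, Matrix.mul_apply, sq]

lemma frob_inv {n : ℕ} (A V U : Matrix (Fin n) (Fin n) ℝ) (hV : V * Vᵀ = 1) (hU : U * Uᵀ = 1) :
    ∑ i, ∑ j, (A i j)^2 = ∑ i, ∑ j, ((V * A * Uᵀ) i j)^2 := by
  have hV' : Vᵀ * V = 1 := mul_eq_one_comm.mp hV
  have hU' : Uᵀ * U = 1 := mul_eq_one_comm.mp hU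
  rw [frob_trace, frob_trace]
  have : V * A * Uᵀ * (V * A * Uᵀ)ᵀ = V * (A * Aᵀ * Vᵀ) := by
    simp only [Matrix.transpose_mul, Matrix.transpose_transpose]
    calc V * A * Uᵀ * (U * (Aᵀ * Vᵀ)) = V * A * (Uᵀ * U) * (Aᵀ * Vᵀ) := by
          simp only [Matrix.mul_assoc]
      _ = _ := by rw [hU']; simp only [Matrix.mul_assoc, Matrix.mul_one]
  rw [this, Matrix.trace_mul_comm V, Matrix.mul_assoc (A * Aᵀ), hV', Matrix.mul_one]

lemma frob_diag {n : ℕ} (V U : Matrix (Fin n) (Fin n) ℝ) (hV : V * Vᵀ = 1) (hU : U * Uᵀ = 1)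
    (l u : Fin n → ℝ) :
    ∑ i, ∑ j, (((Vᵀ * diagonal l * V) - (Uᵀ * diagonal u * U)) i j)^2
      = ∑ i, ∑ k, (l i - u k)^2 * ((V * Uᵀ) i k)^2 := by
  rw [frob_inv _ V U hV hU]
  have : V * ((Vᵀ * diagonal l * V) - (Uᵀ * diagonal u * U)) * Uᵀ
      = diagonal l * (V * Uᵀ) - (V * Uᵀ) * diagonal u := by
    rw [Matrix.mul_sub, Matrix.sub_mul]
    congr 1
    · calc _ = (V * Vᵀ) * (diagonal l * (V * Uᵀ)) := by simp only [Matrix.mul_assoc]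
        _ = _ := by rw [hV, Matrix.one_mul]
    · calc _ = ((V * Uᵀ) * diagonal u) * (U * Uᵀ) := by simp only [Matrix.mul_assoc]
        _ = _ := by rw [hU, Matrix.mul_one]
  rw [this]
  refine Finset.sum_congr rfl fun i _ => Finset.sum_congr rfl fun k _ => ?_
  rw [Matrix.sub_apply, Matrix.diagonal_mul, Matrix.mul_diagonal]
  ring

lemma row_sum {n : ℕ} (W : Matrix (Fin n) (Fin n) ℝ) (hW : W * Wᵀ = 1) (i : Fin n) :
    ∑ k, (W i k)^2 = 1 := by
  have := congrFun (congrFun hW i) i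
  simpa [Matrix.mul_apply, sq] using this

lemma knapsack {n m : ℕ} (hm : m ≤ n) (p s : Fin n → ℝ) (hp : ∀ i j, i ≤ j → p j ≤ p i)
    (hp0 : ∀ i, 0 ≤ p i) (hs0 : ∀ i, 0 ≤ s i) (hs1 : ∀ i, s i ≤ 1) (hs : ∑ i, s i ≤ m) :
    ∑ i, s i * p i ≤ ∑ i : Fin n, if (i : ℕ) < m then p i else 0 := by
  obtain ⟨c, hc0, hc1, hc2⟩ : ∃ c : ℝ, 0 ≤ c ∧ (∀ i : Fin n, (i : ℕ) < m → c ≤ p i) ∧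
      (∀ i : Fin n, ¬ (i : ℕ) < m → p i ≤ c) := by
    by_cases h : m < n
    · exact ⟨p ⟨m, h⟩, hp0 _, fun i hi => hp _ _ (Fin.le_def.2 hi.le),
        fun i hi => hp _ _ (Fin.le_def.2 (not_lt.1 hi))⟩
    · exact ⟨0, le_rfl, fun i _ => hp0 i, fun i hi => absurd i.2 (by omega)⟩
  have hcard : ∑ i : Fin n, (if (i : ℕ) < m then (1 : ℝ) else 0) = m := by
    rw [Finset.sum_boole, Fin.card_filter_val_lt, min_eq_right hm]
  have key : ∀ i : Fin n, s i * p i ≤ c * s i + (if (i : ℕ) < m then p i else 0)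
      - c * (if (i : ℕ) < m then (1 : ℝ) else 0) := by
    intro i
    split_ifs with h
    · nlinarith [hc1 i h, hs1 i]
    · nlinarith [hc2 i h, hs0 i]
  have := Finset.sum_le_sum (fun i (_ : i ∈ Finset.univ) => key i)
  rw [Finset.sum_sub_distrib, Finset.sum_add_distrib, ← Finset.mul_sum, ← Finset.mul_sum,
    hcard] at this
  nlinarith

lemma strain_lower {n m : ℕ} (hm : m ≤ n) (W : Matrix (Fin n) (Fin n) ℝ) (hW : W * Wᵀ = 1)
    (l u : Fin n → ℝ) (hl : ∀ i j, i ≤ j → l j ≤ l i) (hu : ∀ i, 0 ≤ u i)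
    (hc : #{k | u k ≠ 0} ≤ m) :
    (∑ i : Fin n, if (i : ℕ) < m then (min (l i) 0)^2 else (l i)^2)
      ≤ ∑ i, ∑ k, (l i - u k)^2 * (W i k)^2 := by
  have hr := row_sum W hW
  have hcol : ∀ k, ∑ i, (W i k)^2 = 1 := fun k => by
    have := row_sum Wᵀ (by rw [Matrix.transpose_transpose]; exact mul_eq_one_comm.mp hW) k
    simpa using this
  have hk := knapsack hm (fun i => (max (l i) 0)^2)
    (fun i => ∑ k with u k ≠ 0, (W i k)^2)
    (fun i j h => by
      have := hl i j h
      gcongr)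
    (fun i => sq_nonneg _) (fun i => Finset.sum_nonneg fun k _ => sq_nonneg _)
    (fun i => by
      rw [← hr i]
      exact Finset.sum_le_sum_of_subset_of_nonneg (Finset.subset_univ _) fun k _ _ => sq_nonneg _)
    (by
      rw [Finset.sum_comm]
      simp only [hcol]
      simpa using hc)
  have hpt : ∀ x : ℝ, x^2 - (max x 0)^2 = (min x 0)^2 := fun x => by
    rcases le_total x 0 with h | h <;> simp [h]
  have h1 : (∑ i : Fin n, if (i : ℕ) < m then (min (l i) 0)^2 else (l i)^2)
      = ∑ i, (l i)^2 - ∑ i : Fin n, if (i : ℕ) < m then (max (l i) 0)^2 else 0 := by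
    rw [← Finset.sum_sub_distrib]
    refine Finset.sum_congr rfl fun i _ => ?_
    split_ifs
    · rw [hpt]
    · ring
  have h2 : ∑ i, (l i)^2 - ∑ i, (∑ k with u k ≠ 0, (W i k)^2) * (max (l i) 0)^2
      ≤ ∑ i, ∑ k, (l i - u k)^2 * (W i k)^2 := by
    rw [← Finset.sum_sub_distrib]
    refine Finset.sum_le_sum fun i _ => ?_
    have : (l i)^2 = ∑ k, (l i)^2 * (W i k)^2 := by rw [← Finset.mul_sum, hr, mul_one]
    rw [this, Finset.sum_filter, Finset.sum_mul, ← Finset.sum_sub_distrib]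
    refine Finset.sum_le_sum fun k _ => ?_
    by_cases h : u k = 0
    · simp [h]
    · rw [if_pos h, mul_comm ((W i k)^2), ← sub_mul, hpt]
      refine mul_le_mul_of_nonneg_right ?_ (sq_nonneg _)
      have := hu k
      rcases le_total (l i) 0 with h | h
      · rw [min_eq_left h]; nlinarith
      · rw [min_eq_right h]; nlinarith [sq_nonneg (l i - u k)]
  linarith

lemma psd_decomp {n : ℕ} (C : Matrix (Fin n) (Fin n) ℝ) (hC : C.PosSemidef) :
    ∃ (U : Matrix (Fin n) (Fin n) ℝ) (u : Fin n → ℝ), U * Uᵀ = 1 ∧ (∀ i, 0 ≤ u i) ∧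
      C = Uᵀ * diagonal u * U ∧ #{k | u k ≠ 0} = C.rank := by
  refine ⟨(hC.1.eigenvectorUnitary : Matrix _ _ ℝ)ᵀ, hC.1.eigenvalues, ?_, hC.eigenvalues_nonneg,
    ?_, ?_⟩
  · have := Unitary.coe_star_mul_self hC.1.eigenvectorUnitary
    rwa [Matrix.star_eq_conjTranspose, Matrix.conjTranspose_eq_transpose_of_trivial] at this
  · have := hC.1.spectral_theorem
    rw [Unitary.conjStarAlgAut_apply, Matrix.star_eq_conjTranspose,
      Matrix.conjTranspose_eq_transpose_of_trivial] at this
    simpa using this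
  · rw [hC.1.rank_eq_card_non_zero_eigs, Fintype.card_subtype]


/-- **Theorem (strain minimization for classical MDS).**
Let `B` be a real symmetric `n × n` matrix with eigenvalues
`λ 0 ≥ λ 1 ≥ … ≥ λ (n-1)` and corresponding orthonormal eigenvectors `v i`,
and fix `m ≤ n`.  The minimum of the strain `‖B - B̂‖_F² = ∑ᵢⱼ (bᵢⱼ - b̂ᵢⱼ)²`
over all positive semi-definite matrices `B̂` of rank at most `m` is
`∑_{i < m} (min (λ i) 0)² + ∑_{i ≥ m} (λ i)²`, and it is attained by the
classical MDS solution `B̂ = ∑_{i < m, λ i > 0} λ i • v i v iᵀ`. -/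
theorem classical_mds_minimizes_strain
    (n m : ℕ) (hm : m ≤ n) (B : Matrix (Fin n) (Fin n) ℝ) (hB : B.IsSymm)
    (lam : Fin n → ℝ) (hdec : ∀ i j : Fin n, i ≤ j → lam j ≤ lam i)
    (v : Fin n → (Fin n → ℝ))
    (hortho : ∀ i j : Fin n, v i ⬝ᵥ v j = if i = j then (1 : ℝ) else 0)
    (heig : ∀ i : Fin n, B *ᵥ v i = lam i • v i) :
    IsLeast
      {E : ℝ | ∃ C : Matrix (Fin n) (Fin n) ℝ, C.PosSemidef ∧ C.rank ≤ m ∧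
        E = ∑ i : Fin n, ∑ j : Fin n, (B i j - C i j)^2}
      (∑ i : Fin n, if (i : ℕ) < m then (min (lam i) 0)^2 else (lam i)^2) ∧
    (∑ i : Fin n, ∑ j : Fin n,
        (B i j - (∑ i ∈ Finset.univ.filter (fun i : Fin n => (i : ℕ) < m ∧ 0 < lam i),
          lam i • Matrix.vecMulVec (v i) (v i)) i j)^2)
      = ∑ i : Fin n, if (i : ℕ) < m then (min (lam i) 0)^2 else (lam i)^2 := by
  set V : Matrix (Fin n) (Fin n) ℝ := Matrix.of v with hVdef
  have hV : V * Vᵀ = 1 := by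
    ext i j
    rw [Matrix.one_apply, ← hortho i j]
    rfl
  have hV' : Vᵀ * V = 1 := mul_eq_one_comm.mp hV
  have hBV : B = Vᵀ * diagonal lam * V := by
    have h : B * Vᵀ = Vᵀ * diagonal lam := by
      ext i j
      rw [Matrix.mul_diagonal]
      have := congrFun (heig j) i
      simp only [Pi.smul_apply, smul_eq_mul] at this
      rw [mul_comm]
      exact this
    rw [← h, Matrix.mul_assoc, hV', Matrix.mul_one]
  set w : Fin n → ℝ := fun i => if (i : ℕ) < m ∧ 0 < lam i then lam i else 0 with hw
  have hC0 : (∑ i ∈ Finset.univ.filter (fun i : Fin n => (i : ℕ) < m ∧ 0 < lam i),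
          lam i • Matrix.vecMulVec (v i) (v i)) = Vᵀ * diagonal w * V := by
    ext a b
    rw [Matrix.mul_apply, Matrix.sum_apply, Finset.sum_filter]
    refine Finset.sum_congr rfl fun i _ => ?_
    rw [Matrix.mul_diagonal]
    simp only [hw, hVdef, Matrix.transpose_apply, Matrix.of_apply, Matrix.smul_apply,
      Matrix.vecMulVec_apply, smul_eq_mul]
    split_ifs <;> ring
  have hval : (∑ i : Fin n, ∑ j : Fin n,
        (B i j - (∑ i ∈ Finset.univ.filter (fun i : Fin n => (i : ℕ) < m ∧ 0 < lam i),
          lam i • Matrix.vecMulVec (v i) (v i)) i j)^2)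
      = ∑ i : Fin n, if (i : ℕ) < m then (min (lam i) 0)^2 else (lam i)^2 := by
    rw [hC0]
    have := frob_diag V V hV hV lam w
    rw [← hBV, hV] at this
    simp only [Matrix.sub_apply] at this
    rw [this]
    refine Finset.sum_congr rfl fun i _ => ?_
    rw [Finset.sum_eq_single i (fun k _ hk => by simp [Matrix.one_apply_ne hk.symm]) (by simp)]
    rw [Matrix.one_apply_eq]
    by_cases h1 : (i : ℕ) < m
    · by_cases h2 : 0 < lam i
      · simp [hw, h1, h2, h2.le]
      · simp [hw, h1, h2, not_lt.1 h2]
    · simp [hw, h1]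
  refine ⟨⟨⟨_, ?_, ?_, hval.symm⟩, ?_⟩, hval⟩
  · rw [hC0]
    have hd : (diagonal w).PosSemidef := by
      refine Matrix.PosSemidef.diagonal fun i => ?_
      simp only [hw]
      split_ifs with h
      · exact h.2.le
      · exact le_rfl
    have := hd.conjTranspose_mul_mul_same V
    rwa [Matrix.conjTranspose_eq_transpose_of_trivial] at this
  · rw [hC0]
    refine (Matrix.rank_mul_le_left _ _).trans ((Matrix.rank_mul_le_right _ _).trans ?_)
    rw [Matrix.rank_diagonal, Fintype.card_subtype]
    calc _ ≤ #{i : Fin n | (i : ℕ) < m} := by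
          refine Finset.card_le_card fun i hi => ?_
          simp only [hw, Finset.mem_filter, Finset.mem_univ, true_and] at hi ⊢
          by_contra h
          simp [h] at hi
      _ ≤ m := by rw [Fin.card_filter_val_lt]; exact min_le_right _ _
  · rintro E ⟨C, hC, hr, rfl⟩
    obtain ⟨U, u, hU, hu, hCU, hcard⟩ := psd_decomp C hC
    have := frob_diag V U hV hU lam u
    rw [← hBV, ← hCU] at this
    simp only [Matrix.sub_apply] at this
    rw [this]
    refine strain_lower hm (V * Uᵀ) ?_ lam u hdec hu (hcard.trans_le hr)
    rw [Matrix.transpose_mul, Matrix.transpose_transpose, Matrix.mul_assoc, ← Matrix.mul_assoc Uᵀ,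
      mul_eq_one_comm.mp hU, Matrix.one_mul, hV]
end

section
/- Fix n ≥ 2 and for an integer k let λ_{k,n} = -(1/2) Σ_{j=0}^{n−1} ((2π/n) · min(j, n−j))² cos(2πjk/n), the eigenvalue of the doubly centered MDS matrix B of n evenly-spaced points on the geodesic circle associated to the k-th discrete Fourier mode. Then for every integer k with 1 ≤ k < n/2, λ_{k,n} > 0 if k is odd and λ_{k,n} < 0 if k is even. -/
open Real

lemma aux_G (t : ℝ) (p : ℕ) :
    (2 - 2 * cos t) * ∑ j ∈ Finset.range p, (j:ℝ)^2 * cos (j * t) =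
      -2 * ∑ j ∈ Finset.range p, cos (j * t)
        - (((p:ℝ) - 1)^2 * cos (p * t) - (p:ℝ)^2 * cos (p * t - t)) + 1 := by
  induction p with
  | zero => simp
  | succ p ih =>
    rw [Finset.sum_range_succ, Finset.sum_range_succ, mul_add, ih]
    push_cast
    rw [show ((p:ℝ) + 1) * t - t = p * t by ring, show ((p:ℝ) + 1) * t = p * t + t by ring,
      cos_add, cos_sub]
    ring

lemma aux_D (t : ℝ) (p : ℕ) :
    (2 - 2 * cos t) * ∑ j ∈ Finset.range p, cos (j * t) =
      -(cos (p * t) - cos (p * t - t)) + 1 - cos t := by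
  induction p with
  | zero => simp
  | succ p ih =>
    rw [Finset.sum_range_succ, mul_add, ih]
    push_cast
    rw [show ((p:ℝ) + 1) * t - t = p * t by ring, show ((p:ℝ) + 1) * t = p * t + t by ring,
      cos_add, cos_sub]
    ring

lemma aux_split (n m q k : ℕ) (t : ℝ) (hn : n = m + 1 + q) (h1 : q ≤ m) (h2 : m ≤ q + 1)
    (ht : n * t = 2 * π * k) :
    ∑ j ∈ Finset.range n, ((min j (n - j) : ℕ) : ℝ)^2 * cos (j * t) =
      ∑ j ∈ Finset.range (m+1), (j:ℝ)^2 * cos (j * t) +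
      ∑ j ∈ Finset.range (q+1), (j:ℝ)^2 * cos (j * t) := by
  have e : ∑ j ∈ Finset.range n, ((min j (n - j) : ℕ) : ℝ)^2 * cos (j * t) =
      ∑ j ∈ Finset.range (m + 1 + q), ((min j (n - j) : ℕ) : ℝ)^2 * cos (j * t) := by
    rw [← hn]
  rw [e, Finset.sum_range_add]
  congr 1
  · apply Finset.sum_congr rfl
    intro j hj
    rw [Finset.mem_range] at hj
    rw [min_eq_left (by omega)]
  · rw [Finset.sum_range_succ', ← Finset.sum_range_reflect]
    simp only [Nat.cast_zero, ne_eq, OfNat.ofNat_ne_zero, not_false_eq_true, zero_pow, zero_mul,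
      add_zero]
    apply Finset.sum_congr rfl
    intro j hj
    rw [Finset.mem_range] at hj
    have a : m + 1 + (q - 1 - j) = n - (j + 1) := by omega
    rw [a, min_eq_right (by omega), show n - (n - (j+1)) = j + 1 by omega,
      Nat.cast_sub (by omega), sub_mul, ht,
      show 2 * π * (k:ℝ) - ((j+1 : ℕ):ℝ) * t = (k:ℝ) * (2 * π) - ((j+1 : ℕ):ℝ) * t by ring,
      cos_nat_mul_two_pi_sub]

lemma aux_main (n k : ℕ) (t : ℝ) (hn : 2 ≤ n) (ht : n * t = 2 * π * k) (h0 : 0 < t) (hpi : t < π) :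
    0 < (-1 : ℝ)^k * ∑ j ∈ Finset.range n, ((min j (n - j) : ℕ) : ℝ)^2 * cos (j * t) := by
  have hc : 0 < 2 - 2 * cos t := by
    have := cos_lt_cos_of_nonneg_of_le_pi le_rfl hpi.le h0
    rw [cos_zero] at this
    linarith
  have hsq : (-1 : ℝ)^k * (-1 : ℝ)^k = 1 := by rw [← mul_pow]; simp
  refine pos_of_mul_pos_right (a := 2 - 2 * cos t) ?_ hc.le
  rcases Nat.even_or_odd' n with ⟨m, rfl | rfl⟩
  · obtain ⟨q, rfl⟩ : ∃ q, m = q + 1 := ⟨m - 1, by omega⟩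
    rw [aux_split _ (q+1) q k t (by ring) (by omega) (by omega) ht]
    have hm : ((q+1:ℕ):ℝ) * t = k * π := by push_cast at ht ⊢; linarith
    have g1 := aux_G t (q+1+1)
    have g2 := aux_G t (q+1)
    have d1 := aux_D t (q+1+1)
    have d2 := aux_D t (q+1)
    have e1 : ((q+1+1:ℕ):ℝ) * t = k * π + t := by rw [← hm]; push_cast; ring
    rw [e1] at g1 d1
    rw [hm] at g2 d2
    simp only [add_sub_cancel_right, cos_add, cos_sub, sin_nat_mul_pi, cos_nat_mul_pi] at g1 g2 d1 d2
    generalize ∑ j ∈ Finset.range (q+1+1), (j:ℝ)^2 * cos (j * t) = G1 at *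
    generalize ∑ j ∈ Finset.range (q+1), (j:ℝ)^2 * cos (j * t) = G2 at *
    generalize ∑ j ∈ Finset.range (q+1+1), cos (j * t) = D1 at *
    generalize ∑ j ∈ Finset.range (q+1), cos (j * t) = D2 at *
    have hD : D1 + D2 = 1 := by
      apply mul_left_cancel₀ hc.ne'
      linear_combination d1 + d2
    push_cast at g1 g2
    have : (2 - 2 * cos t) * ((-1)^k * (G1 + G2)) = 4 * (q + 1) := by
      linear_combination (-1)^k * (g1 + g2) - 2 * (-1)^k * hD + 4 * (q+1) * hsq
    rw [this]; positivity
  · rw [aux_split _ m m k t (by ring) (by omega) (by omega) ht]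
    have hm : (m:ℝ) * t = k * π - t / 2 := by push_cast at ht; linarith
    have g1 := aux_G t (m+1)
    have d1 := aux_D t (m+1)
    have e1 : ((m+1:ℕ):ℝ) * t = k * π + t / 2 := by push_cast; linarith
    have e2 : (k:ℝ) * π + t / 2 - t = k * π - t / 2 := by ring
    rw [e1, e2] at g1 d1
    have c1 : cos ((k:ℝ) * π + t / 2) = (-1)^k * cos (t/2) := by
      rw [cos_add, sin_nat_mul_pi, cos_nat_mul_pi]; ring
    have c2 : cos ((k:ℝ) * π - t / 2) = (-1)^k * cos (t/2) := by
      rw [cos_sub, sin_nat_mul_pi, cos_nat_mul_pi]; ring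
    rw [c1, c2] at g1 d1
    generalize ∑ j ∈ Finset.range (m+1), (j:ℝ)^2 * cos (j * t) = G1 at *
    generalize ∑ j ∈ Finset.range (m+1), cos (j * t) = D1 at *
    have hD : 2 * D1 = 1 := by
      apply mul_left_cancel₀ hc.ne'
      linear_combination 2 * d1
    push_cast at g1
    have : (2 - 2 * cos t) * ((-1)^k * (G1 + G1)) = 2 * (2 * m + 1) * cos (t/2) := by
      linear_combination 2 * (-1)^k * g1 - 2 * (-1)^k * hD + 2 * (2 * m + 1) * cos (t/2) * hsq
    rw [this]
    have : 0 < cos (t/2) := cos_pos_of_mem_Ioo ⟨by linarith, by linarith⟩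
    positivity

/-- **Proposition (signs of the circle MDS eigenvalues).**
For `n` evenly-spaced points on the geodesic circle, the eigenvalue
`λ_{k,n} = -(1/2) ∑_{j=0}^{n−1} ((2π/n) min(j, n−j))² cos(2πjk/n)` of the
doubly centered MDS matrix associated to the `k`-th discrete Fourier mode is
positive for odd `k` and negative for even `k`, for all `1 ≤ k < n/2`. -/
theorem circle_mds_eigenvalue_signs
    (n : ℕ) (hn : 2 ≤ n) (k : ℕ) (hk1 : 1 ≤ k) (hk2 : 2 * k < n) :
    (Odd k → 0 < -(1/2 : ℝ) * ∑ j ∈ Finset.range n,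
      ((2 * π / n) * ((min j (n - j) : ℕ) : ℝ))^2 * Real.cos (2 * π * j * k / n)) ∧
    (Even k → -(1/2 : ℝ) * ∑ j ∈ Finset.range n,
      ((2 * π / n) * ((min j (n - j) : ℕ) : ℝ))^2 * Real.cos (2 * π * j * k / n) < 0) := by
  have hn0 : (0:ℝ) < n := by exact_mod_cast (by omega : 0 < n)
  have hk0 : (0:ℝ) < k := by exact_mod_cast (by omega : 0 < k)
  have hkn : 2 * (k:ℝ) < n := by exact_mod_cast hk2
  have key := aux_main n k (2 * π * k / n) hn (by field_simp) (by positivity)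
    (by rw [div_lt_iff₀ hn0]; nlinarith [pi_pos])
  have e : ∑ j ∈ Finset.range n,
      ((2 * π / n) * ((min j (n - j) : ℕ) : ℝ))^2 * Real.cos (2 * π * j * k / n) =
      (2 * π / n)^2 * ∑ j ∈ Finset.range n,
        ((min j (n - j) : ℕ) : ℝ)^2 * cos (j * (2 * π * k / n)) := by
    rw [Finset.mul_sum]
    apply Finset.sum_congr rfl
    intro j _
    rw [show 2 * π * (j:ℝ) * k / n = j * (2 * π * k / n) by ring]
    ring
  rw [e]
  have hp : 0 < (2 * π / (n:ℝ))^2 := by positivity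
  constructor
  · intro h
    rw [h.neg_one_pow] at key
    nlinarith [mul_pos hp key]
  · intro h
    rw [h.neg_one_pow] at key
    nlinarith [mul_pos hp key]
end

section
/- For every fixed integer k ≥ 1, the normalized discrete Fourier eigenvalues of the MDS matrices of n evenly-spaced points on the geodesic circle converge as n → ∞: lim_{n→∞} (1/n) Σ_{j=0}^{n−1} (-(1/2)) ((2π/n) · min(j, n−j))² cos(2πjk/n) = (−1)^{k+1} / k². In particular the limit is 1/k² for odd k and −1/k² for even k. -/
open Real Filter

lemma riemann_sum_aux (f : ℝ → ℝ) (hf : Continuous f) :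
    Tendsto (fun n : ℕ => (1 / (n : ℝ)) * ∑ j ∈ Finset.range n, f ((j : ℝ) / n))
      atTop (nhds (∫ x in (0:ℝ)..1, f x)) := by
  rw [Metric.tendsto_atTop]
  intro ε hε
  have huc := (isCompact_Icc (a := (0:ℝ)) (b := 1)).uniformContinuousOn_of_continuous
    hf.continuousOn
  rw [Metric.uniformContinuousOn_iff] at huc
  obtain ⟨δ, hδ, H⟩ := huc (ε / 2) (by positivity)
  obtain ⟨N, hN⟩ := exists_nat_gt (1 / δ)
  refine ⟨N + 1, fun n hn => ?_⟩
  have hn0 : (0:ℝ) < n := by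
    have : 0 < n := by omega
    exact_mod_cast this
  have hnδ : 1 / (n:ℝ) < δ := by
    have h1 : (N:ℝ) ≤ n := by
      have : N ≤ n := by omega
      exact_mod_cast this
    rw [div_lt_iff₀ hn0]
    rw [div_lt_iff₀ hδ] at hN
    nlinarith
  have hint := intervalIntegral.sum_integral_adjacent_intervals (f := f)
    (μ := MeasureTheory.volume) (a := fun j : ℕ => (j:ℝ) / n) (n := n)
    (fun j _ => hf.intervalIntegrable _ _)
  simp only [Nat.cast_zero, zero_div, div_self hn0.ne'] at hint
  rw [← hint, Finset.mul_sum, dist_eq_norm, ← Finset.sum_sub_distrib]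
  have hb : ∀ j ∈ Finset.range n, ‖1 / (n:ℝ) * f (j / n) -
      ∫ x in ((j:ℝ) / n)..(((j + 1 : ℕ) : ℝ) / n), f x‖ ≤ ε / 2 * (1 / n) := by
    intro j hj
    have hjn : (j:ℝ) + 1 ≤ n := by
      have := Finset.mem_range.mp hj
      exact_mod_cast this
    have hlen : ((j + 1 : ℕ) : ℝ) / n - (j:ℝ) / n = 1 / n := by
      push_cast; ring
    have hc : 1 / (n:ℝ) * f (j / n) =
        ∫ x in ((j:ℝ) / n)..(((j + 1 : ℕ) : ℝ) / n), f (j / n) := by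
      rw [intervalIntegral.integral_const, hlen, smul_eq_mul]
    have hp : 0 < 1 / (n:ℝ) := by positivity
    rw [hc, ← intervalIntegral.integral_sub (by simp) (hf.intervalIntegrable _ _)]
    refine (intervalIntegral.norm_integral_le_of_norm_le_const (C := ε / 2) ?_).trans ?_
    · intro x hx
      rw [Set.uIoc_of_le (by linarith)] at hx
      have hj0 : 0 ≤ (j:ℝ) / n := by positivity
      have hj1 : ((j + 1 : ℕ) : ℝ) / n ≤ 1 := by
        rw [div_le_one hn0]; push_cast; exact hjn
      have := H (j / n) ⟨hj0, by linarith⟩ x ⟨by linarith [hx.1], by linarith [hx.2]⟩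
        (by rw [Real.dist_eq, abs_lt]; constructor <;> linarith [hx.1, hx.2])
      rw [dist_eq_norm] at this
      exact this.le
    · rw [hlen, abs_of_pos hp]
  refine (norm_sum_le_of_le _ hb).trans_lt ?_
  rw [Finset.sum_const, Finset.card_range, nsmul_eq_mul]
  have : (n:ℝ) * (ε / 2 * (1 / n)) = ε / 2 := by field_simp
  rw [this]; linarith

lemma half_integral_aux (k : ℕ) (hk : 1 ≤ k) :
    ∫ x in (0:ℝ)..(1/2), x ^ 2 * Real.cos (2 * π * k * x) = (-1) ^ k / (2 * π * k) ^ 2 := by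
  have hk0 : (0:ℝ) < k := by exact_mod_cast hk
  have ha : 2 * π * (k:ℝ) ≠ 0 := by positivity
  have hs : Real.sin (2 * π * k * (1/2)) = 0 := by
    rw [show 2 * π * (k:ℝ) * (1/2) = k * π by ring]; exact Real.sin_nat_mul_pi k
  have hc : Real.cos (2 * π * k * (1/2)) = (-1) ^ k := by
    rw [show 2 * π * (k:ℝ) * (1/2) = k * π by ring]; exact Real.cos_nat_mul_pi k
  generalize 2 * π * (k:ℝ) = a at *
  have hd : ∀ x ∈ Set.uIcc (0:ℝ) (1/2), HasDerivAt
      (fun x => x ^ 2 * Real.sin (a * x) / a + 2 * x * Real.cos (a * x) / a ^ 2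
        - 2 * Real.sin (a * x) / a ^ 3) (x ^ 2 * Real.cos (a * x)) x := by
    intro x _
    have hl : HasDerivAt (fun x : ℝ => a * x) a x := by
      simpa using (hasDerivAt_id x).const_mul a
    have h2 : HasDerivAt (fun x : ℝ => 2 * x) 2 x := by
      simpa using (hasDerivAt_id x).const_mul 2
    refine HasDerivAt.congr_deriv (((((hasDerivAt_pow 2 x).mul hl.sin).div_const a).add
      ((h2.mul hl.cos).div_const (a ^ 2))).sub ((hl.sin.const_mul 2).div_const (a ^ 3))) ?_
    field_simp
    push_cast
    ring
  rw [intervalIntegral.integral_eq_sub_of_hasDerivAt hd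
    ((by fun_prop : Continuous fun x : ℝ => x ^ 2 * Real.cos (a * x)).intervalIntegrable _ _)]
  rw [hs, hc]
  simp

lemma full_integral_aux (k : ℕ) (hk : 1 ≤ k) :
    ∫ x in (0:ℝ)..1, (-(1/2 : ℝ)) * (2 * π * min x (1 - x)) ^ 2 * Real.cos (2 * π * k * x)
      = (-1 : ℝ)^(k + 1) / (k : ℝ)^2 := by
  have hk0 : (0:ℝ) < k := by exact_mod_cast hk
  have hcont : Continuous fun x : ℝ =>
    (-(1/2 : ℝ)) * (2 * π * min x (1 - x)) ^ 2 * Real.cos (2 * π * k * x) := by fun_prop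
  have h1 : ∫ x in (0:ℝ)..(1/2),
      (-(1/2 : ℝ)) * (2 * π * min x (1 - x)) ^ 2 * Real.cos (2 * π * k * x)
      = -(2 * π ^ 2) * ((-1) ^ k / (2 * π * k) ^ 2) := by
    rw [← half_integral_aux k hk, ← intervalIntegral.integral_const_mul]
    apply intervalIntegral.integral_congr
    intro x hx
    rw [Set.uIcc_of_le (by norm_num)] at hx
    simp only
    rw [min_eq_left (by linarith [hx.2])]
    ring
  have h2 : ∫ x in (1/2:ℝ)..1,
      (-(1/2 : ℝ)) * (2 * π * min x (1 - x)) ^ 2 * Real.cos (2 * π * k * x)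
      = ∫ x in (0:ℝ)..(1/2),
      (-(1/2 : ℝ)) * (2 * π * min x (1 - x)) ^ 2 * Real.cos (2 * π * k * x) := by
    have := intervalIntegral.integral_comp_sub_left (a := 0) (b := 1/2) (fun x : ℝ =>
      (-(1/2 : ℝ)) * (2 * π * min x (1 - x)) ^ 2 * Real.cos (2 * π * k * x)) 1
    rw [show (1:ℝ) - 1/2 = 1/2 by norm_num, sub_zero] at this
    rw [← this]
    apply intervalIntegral.integral_congr
    intro x _
    simp only
    rw [show 2 * π * (k:ℝ) * (1 - x) = k * (2 * π) - 2 * π * k * x by ring,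
      Real.cos_nat_mul_two_pi_sub, sub_sub_cancel, min_comm]
  rw [← intervalIntegral.integral_add_adjacent_intervals (b := 1/2)
    (hcont.intervalIntegrable _ _) (hcont.intervalIntegrable _ _), h2, h1]
  have := Real.pi_pos
  field_simp
  ring

/-- **Proposition (limit of the normalized circle MDS eigenvalues).**
For fixed `k ≥ 1`, the normalized eigenvalue `λ_{k,n}/n` of the doubly
centered MDS matrix of `n` evenly-spaced points on the geodesic circle
converges, as `n → ∞`, to `(−1)^{k+1}/k²`. -/
theorem circle_mds_eigenvalue_limit (k : ℕ) (hk : 1 ≤ k) :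
    Tendsto
      (fun n : ℕ => (1 / (n : ℝ)) * ∑ j ∈ Finset.range n,
        (-(1/2 : ℝ)) * ((2 * π / n) * ((min j (n - j) : ℕ) : ℝ))^2
          * Real.cos (2 * π * j * k / n))
      atTop (nhds ((-1 : ℝ)^(k + 1) / (k : ℝ)^2)) := by
  rw [← full_integral_aux k hk]
  refine (riemann_sum_aux _ (by fun_prop)).congr fun n => ?_
  congr 1
  apply Finset.sum_congr rfl
  intro j hj
  have hj' := Finset.mem_range.mp hj
  have hn0 : (0:ℝ) < n := by
    have : 0 < n := by omega
    exact_mod_cast this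
  have hm : min ((j:ℝ) / n) (1 - j / n) = ((min j (n - j) : ℕ) : ℝ) / n := by
    rw [Nat.cast_min, Nat.cast_sub hj'.le, ← min_div_div_right hn0.le, sub_div,
      div_self hn0.ne']
  rw [hm, show 2 * π * (k:ℝ) * (j / n) = 2 * π * j * k / n by ring]
  congr 2
  ring
end

section
/- For every nonzero integer k and every real x, -(1/2) · (1/(2π)) · ∫_{x−π}^{x+π} (y − x)² e^{iky} dy = ((−1)^{k+1} / k²) · e^{ikx}. Consequently, the complex exponentials φ_k(x) = e^{ikx} are eigenfunctions, with eigenvalues λ_k = (−1)^{k+1}/k², of the integral operator on the circle with kernel -(1/2) d(x,y)² where d is the geodesic distance and the measure is the uniform probability measure dθ/(2π). -/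
open Real Complex

/-- **Lemma (eigenfunctions of the MDS operator of the geodesic circle).**
For every nonzero integer `k` and real `x`,
`-(1/2) (1/(2π)) ∫_{x−π}^{x+π} (y−x)² e^{iky} dy = ((−1)^{k+1}/k²) e^{ikx}`;
i.e. the complex exponentials `e^{ikx}` are eigenfunctions, with eigenvalues
`(−1)^{k+1}/k²`, of the integral operator on the circle with kernel
`-(1/2) d(x,y)²` (geodesic distance, uniform measure `dθ/(2π)`). -/
theorem circle_mds_eigenfunctions (k : ℤ) (hk : k ≠ 0) (x : ℝ) :
    -(1/2 : ℂ) * (1 / (2 * (π : ℂ))) *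
        ∫ y in (x - π)..(x + π), (((y - x : ℝ) : ℂ))^2 * Complex.exp ((k : ℂ) * y * Complex.I)
      = ((-1 : ℂ)^(k + 1) / (k : ℂ)^2) * Complex.exp ((k : ℂ) * x * Complex.I) := by
  have hk' : (k : ℂ) ≠ 0 := by exact_mod_cast hk
  have hpi : (π : ℂ) ≠ 0 := by exact_mod_cast Real.pi_ne_zero
  have hI : Complex.I ≠ 0 := Complex.I_ne_zero
  have hc : (k : ℂ) * Complex.I ≠ 0 := mul_ne_zero hk' hI
  obtain ⟨c, hcdef⟩ : ∃ c : ℂ, c = (k : ℂ) * Complex.I := ⟨_, rfl⟩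
  rw [← hcdef] at hc
  have hderiv : ∀ y : ℝ, HasDerivAt
      (fun y : ℝ => (((y : ℂ) - x) ^ 2 / c - 2 * ((y : ℂ) - x) / c ^ 2 + 2 / c ^ 3)
        * Complex.exp (c * y))
      ((((y - x : ℝ) : ℂ)) ^ 2 * Complex.exp ((k : ℂ) * y * Complex.I)) y := by
    intro y
    have h0 : HasDerivAt (fun y : ℝ => (y : ℂ)) 1 y := Complex.ofRealCLM.hasDerivAt
    have h1 : HasDerivAt (fun y : ℝ => (y : ℂ) - x) 1 y := h0.sub_const _
    have h2 := (((h1.pow 2).div_const c).sub ((h1.const_mul 2).div_const (c ^ 2))).add_const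
      (2 / c ^ 3)
    have h3 := (h0.const_mul c).cexp
    refine (h2.mul h3).congr_deriv ?_
    have e : (k : ℂ) * y * Complex.I = c * y := by rw [hcdef]; ring
    rw [e]
    simp
    field_simp
    ring
  have hE : Complex.exp ((k : ℂ) * (π * Complex.I)) = (-1) ^ k := by
    rw [Complex.exp_int_mul, Complex.exp_pi_mul_I]
  have hE' : Complex.exp (-((k : ℂ) * (π * Complex.I))) = (-1) ^ k := by
    rw [Complex.exp_neg, hE, ← inv_zpow]
    norm_num
  have hp : Complex.exp (c * ((x + π : ℝ) : ℂ)) = Complex.exp (k * x * Complex.I) * (-1) ^ k := by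
    rw [← hE, ← Complex.exp_add, hcdef]
    congr 1
    push_cast
    ring
  have hm : Complex.exp (c * ((x - π : ℝ) : ℂ)) = Complex.exp (k * x * Complex.I) * (-1) ^ k := by
    rw [← hE', ← Complex.exp_add, hcdef]
    congr 1
    push_cast
    ring
  rw [intervalIntegral.integral_eq_sub_of_hasDerivAt (fun y _ => hderiv y)
    (Continuous.intervalIntegrable (by fun_prop) _ _), hp, hm,
    zpow_add₀ (by norm_num : (-1 : ℂ) ≠ 0)]
  have hc2 : c ^ 2 = -(k : ℂ) ^ 2 := by rw [hcdef, mul_pow, Complex.I_sq]; ring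
  rw [hc2]
  push_cast
  generalize Complex.exp (k * x * Complex.I) = E
  generalize (-1 : ℂ) ^ k = s
  field_simp
  ring
end

section
/- Define γ : ℝ → ℓ² by listing, for j = 0, 1, 2, …, the pair of coordinates (√2/(2j+1)) cos((2j+1)θ) and (√2/(2j+1)) sin((2j+1)θ), i.e. γ(θ) = √2 (cos θ, sin θ, (1/3)cos 3θ, (1/3)sin 3θ, (1/5)cos 5θ, (1/5)sin 5θ, …). Then γ(θ) belongs to ℓ² for every θ, and ‖γ(θ)‖_{ℓ²}² = 2 Σ_{k odd} 1/k² = π²/4 for all θ ∈ ℝ; that is, the MDS embedding of the geodesic circle lies on the sphere of radius π/2 in ℓ². -/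
open Real

/-- The coordinates of the MDS embedding `γ` of the geodesic circle into `ℓ²`:
for `j = 0, 1, 2, …`, coordinate `2j` is `(√2/(2j+1)) cos((2j+1)θ)` and
coordinate `2j+1` is `(√2/(2j+1)) sin((2j+1)θ)`. -/
noncomputable def mdsCircleCoord (θ : ℝ) (i : ℕ) : ℝ :=
  if i % 2 = 0 then Real.sqrt 2 / ((i : ℝ) + 1) * Real.cos (((i : ℝ) + 1) * θ)
  else Real.sqrt 2 / (i : ℝ) * Real.sin ((i : ℝ) * θ)

theorem odd_hasSum_aux :
    HasSum (fun j : ℕ => 1 / ((2 * (j : ℝ) + 1))^2) (π^2 / 8) := by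
  have hz := hasSum_zeta_two
  have he : HasSum (fun j : ℕ => (1 : ℝ) / ((2 * j : ℕ) : ℝ)^2) (π^2 / 24) := by
    have := hz.mul_left (1/4 : ℝ)
    convert! this using 1
    · funext j
      push_cast
      rw [mul_pow, one_div, one_div, mul_inv]
      norm_num
    · ring
  have ho : Summable (fun j : ℕ => (1 : ℝ) / ((2 * j + 1 : ℕ) : ℝ)^2) :=
    hz.summable.comp_injective (i := fun j : ℕ => 2 * j + 1) (fun a b h => by
      simp only at h
      omega)
  have h := (HasSum.even_add_odd (f := fun n : ℕ => (1 : ℝ) / (n : ℝ)^2) he ho.hasSum).unique hz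
  have h2 := ho.hasSum
  have h3 : ∑' j : ℕ, (1 : ℝ) / ((2 * j + 1 : ℕ) : ℝ)^2 = π^2 / 8 := by linarith
  rw [h3] at h2
  simpa using h2

theorem coord_hasSum_aux (θ : ℝ) :
    HasSum (fun i : ℕ => (mdsCircleCoord θ i)^2) (π^2 / 4) := by
  have ho := odd_hasSum_aux
  have e1 : ∀ j : ℕ, (mdsCircleCoord θ (2 * j))^2
      = 2 * (1 / (2 * (j : ℝ) + 1)^2) * Real.cos ((2 * (j : ℝ) + 1) * θ)^2 := by
    intro j
    have : (2 * j) % 2 = 0 := by omega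
    simp only [mdsCircleCoord, this, if_true]
    push_cast
    rw [mul_pow, div_pow, Real.sq_sqrt (by norm_num)]
    ring
  have e2 : ∀ j : ℕ, (mdsCircleCoord θ (2 * j + 1))^2
      = 2 * (1 / (2 * (j : ℝ) + 1)^2) * Real.sin ((2 * (j : ℝ) + 1) * θ)^2 := by
    intro j
    have : ¬ (2 * j + 1) % 2 = 0 := by omega
    simp only [mdsCircleCoord, this, if_false]
    push_cast
    rw [mul_pow, div_pow, Real.sq_sqrt (by norm_num)]
    ring
  have s1 : Summable (fun j : ℕ => (mdsCircleCoord θ (2 * j))^2) := by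
    refine Summable.of_nonneg_of_le (fun j => sq_nonneg _) (fun j => ?_) (ho.summable.mul_left 2)
    rw [e1]
    exact mul_le_of_le_one_right (by positivity) (Real.cos_sq_le_one _)
  have s2 : Summable (fun j : ℕ => (mdsCircleCoord θ (2 * j + 1))^2) := by
    refine Summable.of_nonneg_of_le (fun j => sq_nonneg _) (fun j => ?_) (ho.summable.mul_left 2)
    rw [e2]
    exact mul_le_of_le_one_right (by positivity) (Real.sin_sq_le_one _)
  have h := HasSum.even_add_odd (f := fun i : ℕ => (mdsCircleCoord θ i)^2) s1.hasSum s2.hasSum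
  have h' := s1.hasSum.add s2.hasSum
  have h'' : HasSum (fun j : ℕ => (mdsCircleCoord θ (2 * j))^2
      + (mdsCircleCoord θ (2 * j + 1))^2) (π^2 / 4) := by
    convert! ho.mul_left 2 using 1
    · funext j
      rw [e1, e2, ← mul_add, Real.cos_sq_add_sin_sq, mul_one]
    · ring
  rw [h'.unique h''] at h
  exact h

/-- **Proposition.**  The MDS embedding
`γ(θ) = √2 (cos θ, sin θ, (1/3)cos 3θ, (1/3)sin 3θ, …)` of the geodesic circle
lands in `ℓ²`, and `‖γ(θ)‖² = 2 ∑_{k odd} 1/k² = π²/4` for every `θ`; that is,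
the embedding lies on the sphere of radius `π/2` in `ℓ²`. -/
theorem mds_circle_embedding_on_sphere :
    ∀ θ : ℝ, Memℓp (mdsCircleCoord θ) 2 ∧
      (∑' i : ℕ, (mdsCircleCoord θ i)^2 = 2 * ∑' j : ℕ, 1 / ((2 * (j : ℝ) + 1))^2) ∧
      (∑' i : ℕ, (mdsCircleCoord θ i)^2 = π^2 / 4) := by
  intro θ
  have h := coord_hasSum_aux θ
  refine ⟨?_, ?_, h.tsum_eq⟩
  · refine memℓp_gen ?_
    simpa using h.summable
  · rw [h.tsum_eq, odd_hasSum_aux.tsum_eq]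
    ring
end

section
/- Let γ : ℝ → ℓ² be defined by γ(θ) = √2 (cos θ, sin θ, (1/3)cos 3θ, (1/3)sin 3θ, (1/5)cos 5θ, (1/5)sin 5θ, …). Then for all θ₁, θ₂ ∈ ℝ, ‖γ(θ₁) − γ(θ₂)‖²_{ℓ²} = 4 Σ_{k odd, k ≥ 1} (1 − cos(k(θ₁ − θ₂))) / k². In particular, the ℓ² distance between γ(θ₁) and γ(θ₂) depends only on θ₁ − θ₂. -/
open Real

theorem mds_even (θ : ℝ) (j : ℕ) : mdsCircleCoord θ (2 * j) =
    Real.sqrt 2 / (2 * (j : ℝ) + 1) * Real.cos ((2 * (j : ℝ) + 1) * θ) := by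
  simp [mdsCircleCoord]

theorem mds_odd (θ : ℝ) (j : ℕ) : mdsCircleCoord θ (2 * j + 1) =
    Real.sqrt 2 / (2 * (j : ℝ) + 1) * Real.sin ((2 * (j : ℝ) + 1) * θ) := by
  have h : (2 * j + 1) % 2 ≠ 0 := by omega
  simp [mdsCircleCoord, h]

theorem mds_summable_base : Summable (fun j : ℕ => 8 / (2 * (j : ℝ) + 1) ^ 2) := by
  have h := (Real.summable_one_div_nat_pow (p := 2)).2 (by norm_num)
  have h2 := (h.comp_injective (i := fun j : ℕ => 2 * j + 1)
    (fun a b hab => by simpa using hab)).mul_left 8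
  refine h2.congr fun j => ?_
  simp [Function.comp, div_eq_mul_inv]

theorem mds_bound (k a b : ℝ) (ha : |a| ≤ 1) (hb : |b| ≤ 1) :
    (Real.sqrt 2 / k * a - Real.sqrt 2 / k * b) ^ 2 ≤ 8 / k ^ 2 := by
  have e : (Real.sqrt 2 / k * a - Real.sqrt 2 / k * b) ^ 2 = 2 * (a - b) ^ 2 / k ^ 2 := by
    rw [← mul_sub, mul_pow, div_pow, Real.sq_sqrt (by norm_num)]; ring
  rw [e]
  rw [abs_le] at ha hb
  gcongr
  nlinarith

theorem mds_key (θ₁ θ₂ : ℝ) :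
      ∑' i : ℕ, (mdsCircleCoord θ₁ i - mdsCircleCoord θ₂ i)^2
        = 4 * ∑' j : ℕ,
            (1 - Real.cos ((2 * (j : ℝ) + 1) * (θ₁ - θ₂))) / (2 * (j : ℝ) + 1)^2 := by
  have he : Summable (fun j : ℕ =>
      (mdsCircleCoord θ₁ (2 * j) - mdsCircleCoord θ₂ (2 * j))^2) := by
    refine Summable.of_nonneg_of_le (fun _ => sq_nonneg _) (fun j => ?_) mds_summable_base
    rw [mds_even, mds_even]
    exact mds_bound _ _ _ (Real.abs_cos_le_one _) (Real.abs_cos_le_one _)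
  have ho : Summable (fun j : ℕ =>
      (mdsCircleCoord θ₁ (2 * j + 1) - mdsCircleCoord θ₂ (2 * j + 1))^2) := by
    refine Summable.of_nonneg_of_le (fun _ => sq_nonneg _) (fun j => ?_) mds_summable_base
    rw [mds_odd, mds_odd]
    exact mds_bound _ _ _ (Real.abs_sin_le_one _) (Real.abs_sin_le_one _)
  rw [← tsum_even_add_odd (f := fun i => (mdsCircleCoord θ₁ i - mdsCircleCoord θ₂ i)^2) he ho,
    ← he.tsum_add ho, ← tsum_mul_left]
  refine tsum_congr fun j => ?_
  rw [mds_even, mds_even, mds_odd, mds_odd, mul_sub (2 * (j : ℝ) + 1), Real.cos_sub,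
    ← mul_sub, ← mul_sub, mul_pow, mul_pow, div_pow, Real.sq_sqrt (by norm_num)]
  have h1 := Real.sin_sq_add_cos_sq ((2 * (j : ℝ) + 1) * θ₁)
  have h2 := Real.sin_sq_add_cos_sq ((2 * (j : ℝ) + 1) * θ₂)
  linear_combination (2 / (2 * (j : ℝ) + 1) ^ 2) * (h1 + h2)

/-- **Proposition.**  For the MDS embedding `γ` of the geodesic circle,
`‖γ(θ₁) − γ(θ₂)‖²_{ℓ²} = 4 ∑_{k odd} (1 − cos(k(θ₁ − θ₂)))/k²`; in particular
the `ℓ²` distance between `γ(θ₁)` and `γ(θ₂)` depends only on `θ₁ − θ₂`. -/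
theorem mds_circle_embedding_distance :
    (∀ θ₁ θ₂ : ℝ,
      ∑' i : ℕ, (mdsCircleCoord θ₁ i - mdsCircleCoord θ₂ i)^2
        = 4 * ∑' j : ℕ,
            (1 - Real.cos ((2 * (j : ℝ) + 1) * (θ₁ - θ₂))) / (2 * (j : ℝ) + 1)^2) ∧
    (∀ θ₁ θ₂ θ₃ θ₄ : ℝ, θ₁ - θ₂ = θ₃ - θ₄ →
      ∑' i : ℕ, (mdsCircleCoord θ₁ i - mdsCircleCoord θ₂ i)^2
        = ∑' i : ℕ, (mdsCircleCoord θ₃ i - mdsCircleCoord θ₄ i)^2) := by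
  refine ⟨mds_key, fun θ₁ θ₂ θ₃ θ₄ h => ?_⟩
  rw [mds_key, mds_key, h]
end

section
/- For every real t with |t| ≤ π, t² = 4 Σ_{k odd, k ≥ 1} (1 − cos(kt)) / k² − 4 Σ_{k even, k ≥ 2} (1 − cos(kt)) / k². Equivalently, the odd Fourier modes of the 2π-periodic extension of t² give exactly the squared ℓ²-distance of the MDS embedding of the geodesic circle, and the error of MDS comes precisely from the even modes: (θ₁ − θ₂)² = ‖γ(θ₁) − γ(θ₂)‖²_{ℓ²} − 4 Σ_{k even} (1 − cos(k(θ₁ − θ₂))) / k² whenever |θ₁ − θ₂| ≤ π. -/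
open Real

lemma aux_F (u : ℝ) (h0 : 0 ≤ u) (h1 : u ≤ 2 * π) :
    HasSum (fun n : ℕ => (1 - Real.cos ((n : ℝ) * u)) / (n : ℝ)^2) (π * u / 2 - u^2 / 4) := by
  have hpi := Real.pi_pos
  have hx : u / (2 * π) ∈ Set.Icc (0 : ℝ) 1 :=
    ⟨by positivity, by rw [div_le_one (by positivity)]; exact h1⟩
  have h := hasSum_zeta_two.sub (hasSum_one_div_nat_pow_mul_cos one_ne_zero hx)
  have hb : (Polynomial.map (algebraMap ℚ ℝ) (Polynomial.bernoulli (2 * 1))).eval (u / (2 * π))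
      = (u / (2 * π))^2 - u / (2 * π) + 6⁻¹ := bernoulliFun_two _
  rw [hb] at h
  convert! h using 1
  · ext n
    have : 2 * π * n * (u / (2 * π)) = n * u := by field_simp
    rw [this]
    ring
  · simp [Nat.factorial]
    field_simp
    ring

lemma aux_sums (t : ℝ) (h0 : 0 ≤ t) (h1 : t ≤ π) :
    HasSum (fun j : ℕ => (1 - Real.cos ((2 * (j : ℝ) + 2) * t)) / (2 * (j : ℝ) + 2)^2)
      ((π * t - t^2) / 4) ∧
    HasSum (fun j : ℕ => (1 - Real.cos ((2 * (j : ℝ) + 1) * t)) / (2 * (j : ℝ) + 1)^2)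
      (π * t / 4) := by
  have hF := aux_F t h0 (by linarith [Real.pi_pos])
  have hE := (aux_F (2 * t) (by linarith) (by linarith)).mul_left (1 / 4)
  have hE0 : HasSum (fun j : ℕ => (1 - Real.cos (((2 * j : ℕ) : ℝ) * t)) / ((2 * j : ℕ) : ℝ)^2)
      ((π * t - t^2) / 4) := by
    convert! hE using 1
    · ext n
      have : ((2 * n : ℕ) : ℝ) * t = n * (2 * t) := by push_cast; ring
      rw [this]
      push_cast
      rw [mul_pow, div_mul_div_comm]
      norm_num
    · ring
  constructor
  · have := (hasSum_nat_add_iff' 1).mpr hE0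
    convert! this using 1
    · ext n
      push_cast
      ring_nf
    · simp
  · have hs : Summable (fun j : ℕ =>
        (1 - Real.cos (((2 * j + 1 : ℕ) : ℝ) * t)) / ((2 * j + 1 : ℕ) : ℝ)^2) :=
      hF.summable.comp_injective (i := fun j : ℕ => 2 * j + 1) (fun a b h => by simpa using h)
    have h2 := HasSum.even_add_odd
      (f := fun n : ℕ => (1 - Real.cos ((n : ℝ) * t)) / (n : ℝ)^2) hE0 hs.hasSum
    have h3 := h2.unique hF
    have h4 := hs.hasSum
    rw [show (∑' j : ℕ, (1 - Real.cos (((2 * j + 1 : ℕ) : ℝ) * t)) / ((2 * j + 1 : ℕ) : ℝ)^2)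
      = π * t / 4 by linarith] at h4
    exact_mod_cast h4

lemma aux_sums' (t : ℝ) (h1 : |t| ≤ π) :
    HasSum (fun j : ℕ => (1 - Real.cos ((2 * (j : ℝ) + 2) * t)) / (2 * (j : ℝ) + 2)^2)
      ((π * |t| - t^2) / 4) ∧
    HasSum (fun j : ℕ => (1 - Real.cos ((2 * (j : ℝ) + 1) * t)) / (2 * (j : ℝ) + 1)^2)
      (π * |t| / 4) := by
  have h := aux_sums |t| (abs_nonneg t) h1
  rcases abs_choice t with ht | ht
  · rw [ht] at h ⊢; exact h
  · rw [ht] at h ⊢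
    simpa only [mul_neg, Real.cos_neg, neg_sq] using h

lemma aux_gamma (a b s : ℝ)
    (h : HasSum (fun j : ℕ => (1 - Real.cos ((2 * (j : ℝ) + 1) * (a - b))) / (2 * (j : ℝ) + 1)^2) s) :
    HasSum (fun i : ℕ => (mdsCircleCoord a i - mdsCircleCoord b i)^2) (4 * s) := by
  have key : ∀ j : ℕ, (mdsCircleCoord a (2 * j) - mdsCircleCoord b (2 * j))^2
      + (mdsCircleCoord a (2 * j + 1) - mdsCircleCoord b (2 * j + 1))^2
      = 4 * ((1 - Real.cos ((2 * (j : ℝ) + 1) * (a - b))) / (2 * (j : ℝ) + 1)^2) := by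
    intro j
    have e1 : (2 * j) % 2 = 0 := by omega
    have e2 : ¬ (2 * j + 1) % 2 = 0 := by omega
    simp only [mdsCircleCoord, e1, e2, if_true, if_false]
    push_cast
    have hk : (2 * (j : ℝ) + 1) ≠ 0 := by positivity
    generalize 2 * (j : ℝ) + 1 = k at *
    rw [mul_sub, Real.cos_sub]
    have q := Real.sq_sqrt (show (0 : ℝ) ≤ 2 by norm_num)
    have p1 := Real.sin_sq_add_cos_sq (k * a)
    have p2 := Real.sin_sq_add_cos_sq (k * b)
    field_simp
    rw [q]
    linear_combination 2 * p1 + 2 * p2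
  have h4 := h.mul_left 4
  have sE : Summable (fun j : ℕ => (mdsCircleCoord a (2 * j) - mdsCircleCoord b (2 * j))^2) :=
    Summable.of_nonneg_of_le (fun j => sq_nonneg _)
      (fun j => by rw [← key j]; exact le_add_of_nonneg_right (sq_nonneg _)) h4.summable
  have sO : Summable (fun j : ℕ =>
      (mdsCircleCoord a (2 * j + 1) - mdsCircleCoord b (2 * j + 1))^2) :=
    Summable.of_nonneg_of_le (fun j => sq_nonneg _)
      (fun j => by rw [← key j]; exact le_add_of_nonneg_left (sq_nonneg _)) h4.summable
  have h5 := sE.hasSum.add sO.hasSum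
  simp only [key] at h5
  rw [← h5.unique h4]
  exact HasSum.even_add_odd (f := fun i : ℕ => (mdsCircleCoord a i - mdsCircleCoord b i)^2)
    sE.hasSum sO.hasSum

/-- **Proposition (the error of MDS comes from the even Fourier modes).**
For `|t| ≤ π`,
`t² = 4 ∑_{k odd} (1 − cos(kt))/k² − 4 ∑_{k even} (1 − cos(kt))/k²`;
equivalently, `(θ₁ − θ₂)² = ‖γ(θ₁) − γ(θ₂)‖²_{ℓ²} − 4 ∑_{k even} (1 − cos(k(θ₁−θ₂)))/k²`
whenever `|θ₁ − θ₂| ≤ π`, where `γ` is the MDS embedding of the geodesic circle. -/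
theorem mds_circle_even_modes_error :
    (∀ t : ℝ, |t| ≤ π →
      t^2 = 4 * (∑' j : ℕ, (1 - Real.cos ((2 * (j : ℝ) + 1) * t)) / (2 * (j : ℝ) + 1)^2)
          - 4 * (∑' j : ℕ, (1 - Real.cos ((2 * (j : ℝ) + 2) * t)) / (2 * (j : ℝ) + 2)^2)) ∧
    (∀ θ₁ θ₂ : ℝ, |θ₁ - θ₂| ≤ π →
      (θ₁ - θ₂)^2
        = (∑' i : ℕ, (mdsCircleCoord θ₁ i - mdsCircleCoord θ₂ i)^2)
          - 4 * (∑' j : ℕ,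
              (1 - Real.cos ((2 * (j : ℝ) + 2) * (θ₁ - θ₂))) / (2 * (j : ℝ) + 2)^2)) := by
  refine ⟨fun t ht => ?_, fun a b hab => ?_⟩
  · obtain ⟨hE, hO⟩ := aux_sums' t ht
    rw [hE.tsum_eq, hO.tsum_eq]
    ring
  · obtain ⟨hE, hO⟩ := aux_sums' (a - b) hab
    rw [hE.tsum_eq, (aux_gamma a b _ hO).tsum_eq]
    ring
end
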